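/- arXiv:1904.00127 — 2 statements merged into one kernel-verified Lean document; each statement's English description precedes it below -/
import Mathlib

section
/- Let α > 0 and Y₀(y) = (1 − |y|^α)/(1 + |y|^α). Then the function y ↦ (2α²|y|^{α−2}/(1 + |y|^α)²) · Y₀(y) · log(1 + |y|^α) is integrable on ℝ² and ∫_{ℝ²} (2α²|y|^{α−2}/(1 + |y|^α)²) · Y₀(y) · log(1 + |y|^α) dy = −2πα. -/
/-!
The integrand depends on `|y|` only, and the substitution `s = |y| ^ α` absorbs the weight
`|y| ^ (α - 2)` for every `α ≠ 0`: up to constants the planar integral becomes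
`∫₀^∞ (1 - s) / (1 + s) ^ 3 * log (1 + s) ds`. Since `(1 - s) / (1 + s) ^ 3` is
`2 t ^ (-3) - t ^ (-2)` at `t = 1 + s`, this is a combination of the integrals
`∫₁^∞ t ^ a * log t dt = 1 / (a + 1) ^ 2`, with value `2 / 4 - 1 = -1 / 2`.
-/

open MeasureTheory Real

noncomputable section

/-- The plane `ℝ²`. -/
abbrev Plane := EuclideanSpace ℝ (Fin 2)

/-- The Laplacian of `f : ℝ² → ℝ`: the sum of the two second partial derivatives. -/
noncomputable def lap (f : Plane → ℝ) (x : Plane) : ℝ :=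
  ∑ i : Fin 2,
    fderiv ℝ (fun y => fderiv ℝ f y (EuclideanSpace.single i 1)) x (EuclideanSpace.single i 1)

/-- The standard singular bubble `U(x) = log(2α²δ^α / (δ^α + |x-ξ|^α)²)`. -/
noncomputable def bubble (α δ : ℝ) (ξ : Plane) (x : Plane) : ℝ :=
  Real.log (2 * α ^ 2 * δ ^ α / (δ ^ α + ‖x - ξ‖ ^ α) ^ 2)

/-- `Y₀(y) = (1 - |y|^α)/(1 + |y|^α)`. -/
noncomputable def Ynull (α : ℝ) (y : Plane) : ℝ :=
  (1 - ‖y‖ ^ α) / (1 + ‖y‖ ^ α)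

section RpowMulLog

open Asymptotics Filter Set
open scoped Topology

variable {a c : ℝ}

theorem tendsto_rpow_mul_log_atTop_nhds_zero (ha : a < 0) :
    Tendsto (fun t : ℝ => t ^ a * log t) atTop (𝓝 0) := by
  refine (isLittleO_log_rpow_atTop (neg_pos.2 ha)).tendsto_div_nhds_zero.congr' ?_
  filter_upwards [eventually_gt_atTop 0] with t ht
  rw [rpow_neg ht.le, div_inv_eq_mul, mul_comm]

theorem hasDerivAt_rpow_mul_log_sub_one {t : ℝ} (ha : a + 1 ≠ 0) (ht : t ≠ 0) :
    HasDerivAt (fun t : ℝ => t ^ (a + 1) * ((a + 1) * log t - 1) / (a + 1) ^ 2)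
      (t ^ a * log t) t := by
  have hpow : HasDerivAt (fun t : ℝ => t ^ (a + 1)) ((a + 1) * t ^ a) t := by
    simpa only [add_sub_cancel_right] using hasDerivAt_rpow_const (p := a + 1) (.inl ht)
  have hlog : HasDerivAt (fun t : ℝ => (a + 1) * log t - 1) ((a + 1) * t⁻¹) t :=
    ((hasDerivAt_log ht).const_mul _).sub_const 1
  refine ((hpow.mul hlog).div_const _).congr_deriv ?_
  rw [rpow_add_one ht]
  field_simp
  ring

theorem integrableOn_Ioi_rpow_mul_log_of_lt (ha : a < -1) (hc : 0 < c) :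
    IntegrableOn (fun t : ℝ => t ^ a * log t) (Ioi c) := by
  obtain ⟨b, hab, hb⟩ := exists_between ha
  have hcont : ContinuousOn (fun t : ℝ => t ^ a * log t) (Ici c) := fun t ht =>
    have ht₀ : t ≠ 0 := (hc.trans_le ht).ne'
    ((continuousAt_rpow_const t a (.inl ht₀)).mul (continuousAt_log ht₀)).continuousWithinAt
  have hbigO : (fun t : ℝ => t ^ a * log t) =O[atTop] fun t => t ^ b := by
    refine ((isBigO_refl (fun t : ℝ => t ^ a) atTop).mul
      (isLittleO_log_rpow_atTop (sub_pos.2 hab)).isBigO).congr' .rfl ?_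
    filter_upwards [eventually_gt_atTop 0] with t ht
    rw [← rpow_add ht, add_sub_cancel]
  exact ((hcont.locallyIntegrableOn measurableSet_Ici).integrableOn_of_isBigO_atTop hbigO
    ⟨Ioi c, Ioi_mem_atTop c, integrableOn_Ioi_rpow_of_lt hb hc⟩).mono_set Ioi_subset_Ici_self

theorem integral_Ioi_rpow_mul_log_of_lt (ha : a < -1) (hc : 0 < c) :
    ∫ t in Ioi c, t ^ a * log t = c ^ (a + 1) * (1 - (a + 1) * log c) / (a + 1) ^ 2 := by
  have ha' : a + 1 < 0 := by linarith
  have hlim : Tendsto (fun t : ℝ => t ^ (a + 1) * ((a + 1) * log t - 1) / (a + 1) ^ 2)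
      atTop (𝓝 0) := by
    have hpow : Tendsto (fun t : ℝ => t ^ (a + 1)) atTop (𝓝 0) := by
      simpa only [neg_neg] using tendsto_rpow_neg_atTop (neg_pos.2 ha')
    have h := (((tendsto_rpow_mul_log_atTop_nhds_zero ha').const_mul (a + 1)).sub hpow).div_const
      ((a + 1) ^ 2)
    simp only [mul_zero, sub_zero, zero_div] at h
    exact h.congr fun t => by ring
  rw [integral_Ioi_of_hasDerivAt_of_tendsto'
    (fun t ht => hasDerivAt_rpow_mul_log_sub_one ha'.ne (hc.trans_le ht).ne')
    (integrableOn_Ioi_rpow_mul_log_of_lt ha hc) hlim]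
  ring

end RpowMulLog

section Translation

open Set

variable {F : Type*} [NormedAddCommGroup F]

theorem integrableOn_Ioi_comp_add_right_iff (f : ℝ → F) (c m : ℝ) :
    IntegrableOn (fun s => f (s + m)) (Ioi c) ↔ IntegrableOn f (Ioi (c + m)) := by
  simpa using! (measurePreserving_add_right volume m).integrableOn_comp_preimage
    (measurableEmbedding_addRight m) (f := f) (s := Ioi (c + m))

theorem integral_Ioi_comp_add_right [NormedSpace ℝ F] (f : ℝ → F) (c m : ℝ) :
    ∫ s in Ioi c, f (s + m) = ∫ t in Ioi (c + m), f t := by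
  simpa using (measurePreserving_add_right volume m).setIntegral_preimage_emb
    (measurableEmbedding_addRight m) f (Ioi (c + m))

end Translation

section Profile

open Set

theorem one_sub_div_one_add_pow_three_mul_log_eq {s : ℝ} (hs : 0 < 1 + s) :
    (1 - s) / (1 + s) ^ 3 * log (1 + s) =
      2 * ((s + 1) ^ (-3 : ℝ) * log (s + 1)) - (s + 1) ^ (-2 : ℝ) * log (s + 1) := by
  rw [add_comm s 1, rpow_neg hs.le, rpow_neg hs.le]
  norm_cast
  field_simp
  ring

theorem integrableOn_Ioi_add_one_rpow_mul_log {a : ℝ} (ha : a < -1) :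
    IntegrableOn (fun s : ℝ => (s + 1) ^ a * log (s + 1)) (Ioi 0) :=
  (integrableOn_Ioi_comp_add_right_iff (fun t => t ^ a * log t) 0 1).2
    (integrableOn_Ioi_rpow_mul_log_of_lt ha (by norm_num))

theorem integral_Ioi_add_one_rpow_mul_log {a : ℝ} (ha : a < -1) :
    ∫ s in Ioi (0 : ℝ), (s + 1) ^ a * log (s + 1) = 1 / (a + 1) ^ 2 := by
  rw [integral_Ioi_comp_add_right (fun t => t ^ a * log t),
    integral_Ioi_rpow_mul_log_of_lt ha (by norm_num)]
  simp

theorem integrableOn_Ioi_one_sub_div_one_add_pow_three_mul_log :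
    IntegrableOn (fun s : ℝ => (1 - s) / (1 + s) ^ 3 * log (1 + s)) (Ioi 0) := by
  have h₃ := integrableOn_Ioi_add_one_rpow_mul_log (a := -3) (by norm_num)
  have h₂ := integrableOn_Ioi_add_one_rpow_mul_log (a := -2) (by norm_num)
  exact IntegrableOn.congr_fun ((h₃.const_mul 2).sub h₂)
    (fun s hs => (one_sub_div_one_add_pow_three_mul_log_eq (add_pos one_pos hs)).symm)
    measurableSet_Ioi

theorem integral_Ioi_one_sub_div_one_add_pow_three_mul_log :
    ∫ s in Ioi (0 : ℝ), (1 - s) / (1 + s) ^ 3 * log (1 + s) = -(1 / 2) := by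
  have h₃ : (-3 : ℝ) < -1 := by norm_num
  have h₂ : (-2 : ℝ) < -1 := by norm_num
  rw [setIntegral_congr_fun measurableSet_Ioi fun s hs =>
      one_sub_div_one_add_pow_three_mul_log_eq (add_pos one_pos hs),
    integral_sub ((integrableOn_Ioi_add_one_rpow_mul_log h₃).const_mul 2)
      (integrableOn_Ioi_add_one_rpow_mul_log h₂),
    integral_const_mul, integral_Ioi_add_one_rpow_mul_log h₃, integral_Ioi_add_one_rpow_mul_log h₂]
  norm_num

end Profile

section Radial

open Module Set

theorem pow_pred_mul_rpow_sub_natCast {r p : ℝ} (hr : 0 < r) {n : ℕ} (hn : 0 < n) :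
    r ^ (n - 1) * r ^ (p - n) = r ^ (p - 1) := by
  rw [← rpow_natCast, ← rpow_add hr, Nat.cast_pred hn]
  congr 1
  ring

variable {E F : Type*} [NormedAddCommGroup E] [NormedSpace ℝ E] [FiniteDimensional ℝ E]
  [Nontrivial E] [MeasurableSpace E] [BorelSpace E] [NormedAddCommGroup F] [NormedSpace ℝ F]
  (μ : Measure E) [μ.IsAddHaarMeasure] {p : ℝ}

theorem integrable_norm_rpow_sub_finrank_smul_comp_norm_rpow_iff (hp : p ≠ 0) (g : ℝ → F) :
    Integrable (fun x : E => ‖x‖ ^ (p - finrank ℝ E) • g (‖x‖ ^ p)) μ ↔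
      IntegrableOn g (Ioi 0) := by
  rw [integrable_fun_norm_addHaar μ (f := fun r => r ^ (p - finrank ℝ E) • g (r ^ p)),
    ← integrableOn_Ioi_comp_rpow_iff' g hp]
  refine integrableOn_congr_fun (fun r hr => ?_) measurableSet_Ioi
  rw [smul_smul, pow_pred_mul_rpow_sub_natCast hr finrank_pos]

theorem integral_norm_rpow_sub_finrank_smul_comp_norm_rpow (hp : p ≠ 0) (g : ℝ → F) :
    ∫ x : E, ‖x‖ ^ (p - finrank ℝ E) • g (‖x‖ ^ p) ∂μ =
      (finrank ℝ E * μ.real (Metric.ball 0 1) / |p|) • ∫ s in Ioi 0, g s := by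
  have hsubst : ∫ r in Ioi (0 : ℝ), r ^ (p - 1) • g (r ^ p) = |p|⁻¹ • ∫ s in Ioi 0, g s := by
    rw [← integral_comp_rpow_Ioi g hp]
    simp_rw [mul_smul]
    rw [integral_smul, inv_smul_smul₀ (abs_ne_zero.2 hp)]
  rw [integral_fun_norm_addHaar μ fun r => r ^ (p - finrank ℝ E) • g (r ^ p),
    setIntegral_congr_fun measurableSet_Ioi fun r hr => by
      rw [smul_smul, pow_pred_mul_rpow_sub_natCast hr finrank_pos],
    hsubst, ← Nat.cast_smul_eq_nsmul ℝ, smul_smul, smul_smul, div_eq_mul_inv]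

end Radial

theorem kernel_Ynull_log_one_add_eq (α : ℝ) (y : Plane) :
    (2 * α ^ 2 * ‖y‖ ^ (α - 2) / (1 + ‖y‖ ^ α) ^ 2) * Ynull α y * log (1 + ‖y‖ ^ α) =
      2 * α ^ 2 * (‖y‖ ^ (α - Module.finrank ℝ Plane) •
        ((1 - ‖y‖ ^ α) / (1 + ‖y‖ ^ α) ^ 3 * log (1 + ‖y‖ ^ α))) := by
  rw [finrank_euclideanSpace_fin, Nat.cast_ofNat, Ynull, smul_eq_mul]
  have : 0 < 1 + ‖y‖ ^ α := by positivity
  field_simp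

theorem integral_kernel_Ynull_log_one_add_general (α : ℝ) :
    Integrable (fun y : Plane =>
        (2 * α ^ 2 * ‖y‖ ^ (α - 2) / (1 + ‖y‖ ^ α) ^ 2) * Ynull α y *
          log (1 + ‖y‖ ^ α)) volume ∧
      ∫ y : Plane,
          (2 * α ^ 2 * ‖y‖ ^ (α - 2) / (1 + ‖y‖ ^ α) ^ 2) * Ynull α y *
            log (1 + ‖y‖ ^ α) =
        -(2 * π * |α|) := by
  rcases eq_or_ne α 0 with rfl | hα
  · simp
  let g : ℝ → ℝ := fun s => (1 - s) / (1 + s) ^ 3 * log (1 + s)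
  have hball : (volume : Measure Plane).real (Metric.ball 0 1) = π := by
    simp [measureReal_def, pi_nonneg]
  simp_rw [kernel_Ynull_log_one_add_eq]
  constructor
  · exact ((integrable_norm_rpow_sub_finrank_smul_comp_norm_rpow_iff volume hα g).2
      integrableOn_Ioi_one_sub_div_one_add_pow_three_mul_log).const_mul _
  · rw [integral_const_mul, integral_norm_rpow_sub_finrank_smul_comp_norm_rpow volume hα g,
      integral_Ioi_one_sub_div_one_add_pow_three_mul_log, hball, finrank_euclideanSpace_fin,
      Nat.cast_ofNat, smul_eq_mul, ← sq_abs α]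
    have habs : |α| ≠ 0 := abs_ne_zero.2 hα
    field_simp

theorem integral_kernel_Ynull_log_one_add (α : ℝ) (hα : 0 < α) :
    Integrable (fun y : Plane =>
        (2 * α ^ 2 * ‖y‖ ^ (α - 2) / (1 + ‖y‖ ^ α) ^ 2) * Ynull α y *
          Real.log (1 + ‖y‖ ^ α)) volume ∧
      ∫ y : Plane,
          (2 * α ^ 2 * ‖y‖ ^ (α - 2) / (1 + ‖y‖ ^ α) ^ 2) * Ynull α y *
            Real.log (1 + ‖y‖ ^ α) =
        -(2 * π * α) := by
  simpa only [abs_of_pos hα] using integral_kernel_Ynull_log_one_add_general α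
end
end

section
/- Let α > 0 and Y₀(y) = (1 − |y|^α)/(1 + |y|^α). Then Y₀ is differentiable on ℝ² \ {0}, the function y ↦ |∇Y₀(y)|² is integrable on ℝ², and ∫_{ℝ²} |∇Y₀(y)|² dy = 4πα/3. -/
open MeasureTheory Real

noncomputable section

/-!
The function `Ynull α` is `y ↦ f (‖y‖ ^ α)` with `f t = (1 - t) / (1 + t)`. In two dimensions the
substitution `t = r ^ α` turns `r (d/dr f (r ^ α))² dr` into `|α| t f'(t)² dt`, because
`dt / t = α dr / r`. Hence raising the radius to the power `α` multiplies the Dirichlet energy of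
a radial function by `|α|`, and it remains to compute
`2π ∫₀^∞ 4t / (1 + t)⁴ dt = 2π · 4 (1/2 - 1/3) = 4π / 3`.
-/

open Module Set

section RadialGradient

variable {E : Type*} [NormedAddCommGroup E] [InnerProductSpace ℝ E] [CompleteSpace E]

lemma hasGradientAt_norm {x : E} (hx : x ≠ 0) :
    HasGradientAt (fun y : E => ‖y‖) (‖x‖⁻¹ • x) x := by
  have hsqrt := (hasStrictFDerivAt_norm_sq x).hasFDerivAt.sqrt
    (pow_ne_zero 2 (norm_ne_zero_iff.mpr hx))
  simp only [Real.sqrt_sq (norm_nonneg _)] at hsqrt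
  rw [hasGradientAt_iff_hasFDerivAt]
  refine hsqrt.congr_fderiv ?_
  ext v
  simp only [one_div, mul_inv_rev, smul_apply, coe_innerSL_apply, nsmul_eq_mul, Nat.cast_ofNat,
    smul_eq_mul, map_smul, InnerProductSpace.toDual_apply_apply]
  ring

lemma hasGradientAt_comp_norm {f : ℝ → ℝ} {f' : ℝ} {x : E} (hx : x ≠ 0)
    (hf : HasDerivAt f f' ‖x‖) :
    HasGradientAt (fun y : E => f ‖y‖) (f' • ‖x‖⁻¹ • x) x := by
  rw [hasGradientAt_iff_hasFDerivAt, map_smul]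
  exact hf.comp_hasFDerivAt x (hasGradientAt_norm hx).hasFDerivAt

lemma norm_gradient_comp_norm {f : ℝ → ℝ} {f' : ℝ} {x : E} (hx : x ≠ 0)
    (hf : HasDerivAt f f' ‖x‖) :
    ‖gradient (fun y : E => f ‖y‖) x‖ = |f'| := by
  rw [(hasGradientAt_comp_norm hx hf).gradient, norm_smul, norm_smul, norm_inv, norm_norm,
    inv_mul_cancel₀ (norm_ne_zero_iff.mpr hx), mul_one, Real.norm_eq_abs]

lemma norm_gradient_comp_norm_sq_ae_eq [MeasurableSpace E] (μ : Measure E) [NullSingletonClass μ]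
    {f f' : ℝ → ℝ} (hf : ∀ r, 0 < r → HasDerivAt f (f' r) r) :
    (fun x : E => ‖gradient (fun y : E => f ‖y‖) x‖ ^ 2) =ᵐ[μ] fun x => f' ‖x‖ ^ 2 := by
  filter_upwards [Measure.ae_ne μ (0 : E)] with x hx
  rw [norm_gradient_comp_norm hx (hf _ (norm_pos_iff.mpr hx)), sq_abs]

end RadialGradient

section RadialEnergy

variable {E : Type*} [NormedAddCommGroup E] [InnerProductSpace ℝ E] [FiniteDimensional ℝ E]
  [Nontrivial E] [MeasurableSpace E] [BorelSpace E] (μ : Measure E) [μ.IsAddHaarMeasure]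
  {f f' : ℝ → ℝ}

lemma integrable_norm_gradient_comp_norm_sq_iff (hf : ∀ r, 0 < r → HasDerivAt f (f' r) r) :
    Integrable (fun x : E => ‖gradient (fun y : E => f ‖y‖) x‖ ^ 2) μ ↔
      IntegrableOn (fun r => r ^ (finrank ℝ E - 1) * f' r ^ 2) (Ioi 0) := by
  rw [integrable_congr (norm_gradient_comp_norm_sq_ae_eq μ hf)]
  exact integrable_fun_norm_addHaar μ (f := fun r => f' r ^ 2)

lemma integral_norm_gradient_comp_norm_sq (hf : ∀ r, 0 < r → HasDerivAt f (f' r) r) :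
    ∫ x : E, ‖gradient (fun y : E => f ‖y‖) x‖ ^ 2 ∂μ =
      finrank ℝ E * μ.real (Metric.ball 0 1) *
        ∫ r in Ioi (0 : ℝ), r ^ (finrank ℝ E - 1) * f' r ^ 2 := by
  rw [integral_congr_ae (norm_gradient_comp_norm_sq_ae_eq μ hf),
    integral_fun_norm_addHaar μ (fun r => f' r ^ 2)]
  simp only [nsmul_eq_mul, smul_eq_mul, mul_assoc]

end RadialEnergy

section PowerSubstitution

lemma hasDerivAt_comp_rpow {f : ℝ → ℝ} {f' α r : ℝ} (hr : 0 < r) (hf : HasDerivAt f f' (r ^ α)) :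
    HasDerivAt (fun r => f (r ^ α)) (f' * (α * r ^ (α - 1))) r :=
  hf.comp r (Real.hasDerivAt_rpow_const (Or.inl hr.ne'))

lemma eqOn_mul_sq_comp_rpow (g : ℝ → ℝ) (α : ℝ) :
    EqOn (fun r : ℝ => r * (g (r ^ α) * (α * r ^ (α - 1))) ^ 2)
      (fun r => |α| * ((|α| * r ^ (α - 1)) • (r ^ α * g (r ^ α) ^ 2))) (Ioi 0) := by
  intro r hr
  have hrpow : r ^ α = r * r ^ (α - 1) := by
    rw [Real.rpow_sub_one (ne_of_gt hr), mul_div_cancel₀ _ (ne_of_gt hr)]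
  calc r * (g (r ^ α) * (α * r ^ (α - 1))) ^ 2
      = α ^ 2 * (r ^ (α - 1) * ((r * r ^ (α - 1)) * g (r ^ α) ^ 2)) := by ring
    _ = |α| * ((|α| * r ^ (α - 1)) • (r ^ α * g (r ^ α) ^ 2)) := by
      rw [← hrpow, ← sq_abs, smul_eq_mul]; ring

lemma integrableOn_Ioi_mul_sq_comp_rpow {g : ℝ → ℝ} (α : ℝ)
    (hg : IntegrableOn (fun t => t * g t ^ 2) (Ioi 0)) :
    IntegrableOn (fun r : ℝ => r * (g (r ^ α) * (α * r ^ (α - 1))) ^ 2) (Ioi 0) := by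
  rcases eq_or_ne α 0 with rfl | hα
  · simp
  · rw [integrableOn_congr_fun (eqOn_mul_sq_comp_rpow g α) measurableSet_Ioi]
    exact ((integrableOn_Ioi_comp_rpow_iff (fun t => t * g t ^ 2) hα).mpr hg).const_mul |α|

lemma integral_Ioi_mul_sq_comp_rpow (g : ℝ → ℝ) (α : ℝ) :
    ∫ r in Ioi (0 : ℝ), r * (g (r ^ α) * (α * r ^ (α - 1))) ^ 2 =
      |α| * ∫ t in Ioi (0 : ℝ), t * g t ^ 2 := by
  rcases eq_or_ne α 0 with rfl | hα
  · simp
  · rw [setIntegral_congr_fun measurableSet_Ioi (eqOn_mul_sq_comp_rpow g α),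
      integral_const_mul, integral_comp_rpow_Ioi (fun t => t * g t ^ 2) hα]

end PowerSubstitution

section PlanarEnergy

variable {E : Type*} [NormedAddCommGroup E] [InnerProductSpace ℝ E] [FiniteDimensional ℝ E]
  [MeasurableSpace E] [BorelSpace E] (μ : Measure E) [μ.IsAddHaarMeasure] {f f' : ℝ → ℝ}

lemma integrable_norm_gradient_comp_norm_rpow_sq (hE : finrank ℝ E = 2)
    (hf : ∀ t, 0 < t → HasDerivAt f (f' t) t)
    (hint : IntegrableOn (fun t => t * f' t ^ 2) (Ioi 0)) (α : ℝ) :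
    Integrable (fun x : E => ‖gradient (fun y : E => f (‖y‖ ^ α)) x‖ ^ 2) μ := by
  have : Nontrivial E := nontrivial_of_finrank_pos (R := ℝ) (hE ▸ two_pos)
  rw [integrable_norm_gradient_comp_norm_sq_iff μ fun _ hr =>
    hasDerivAt_comp_rpow hr (hf _ (Real.rpow_pos_of_pos hr α)), hE]
  simpa only [Nat.add_one_sub_one, pow_one] using integrableOn_Ioi_mul_sq_comp_rpow α hint

lemma integral_norm_gradient_comp_norm_rpow_sq (hE : finrank ℝ E = 2)
    (hf : ∀ t, 0 < t → HasDerivAt f (f' t) t) (α : ℝ) :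
    ∫ x : E, ‖gradient (fun y : E => f (‖y‖ ^ α)) x‖ ^ 2 ∂μ =
      2 * μ.real (Metric.ball 0 1) * (|α| * ∫ t in Ioi (0 : ℝ), t * f' t ^ 2) := by
  have : Nontrivial E := nontrivial_of_finrank_pos (R := ℝ) (hE ▸ two_pos)
  rw [integral_norm_gradient_comp_norm_sq μ fun _ hr =>
    hasDerivAt_comp_rpow hr (hf _ (Real.rpow_pos_of_pos hr α)), hE,
    ← integral_Ioi_mul_sq_comp_rpow]
  simp only [Nat.add_one_sub_one, pow_one, Nat.cast_ofNat]

end PlanarEnergy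

lemma integral_Ioi_add_rpow_of_lt {a c m : ℝ} (ha : a < -1) (hc : -m < c) :
    ∫ x in Ioi c, (x + m) ^ a = -(c + m) ^ (a + 1) / (a + 1) := by
  have hshift := (measurePreserving_add_right volume m).setIntegral_preimage_emb
    (measurableEmbedding_addRight m) (fun x : ℝ => x ^ a) (Ioi (c + m))
  rw [preimage_add_const_Ioi, add_sub_cancel_right] at hshift
  rw [hshift, integral_Ioi_rpow_of_lt ha (neg_lt_iff_pos_add.mp hc)]

section Cayley

/-- The real Cayley transform `t ↦ (1 - t) / (1 + t)`, the profile of `Ynull` in the variable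
`t = ‖y‖ ^ α`. It takes the junk value `0` at `t = -1`. -/
def cayley (t : ℝ) : ℝ := (1 - t) / (1 + t)

lemma hasDerivAt_cayley {t : ℝ} (ht : 1 + t ≠ 0) :
    HasDerivAt cayley (-2 / (1 + t) ^ 2) t := by
  refine (((hasDerivAt_id' t).const_sub 1).div ((hasDerivAt_id' t).const_add 1) ht).congr_deriv ?_
  ring

lemma hasDerivAt_deriv_cayley_of_pos {t : ℝ} (ht : 0 < t) :
    HasDerivAt cayley (deriv cayley t) t :=
  (hasDerivAt_cayley (by positivity)).differentiableAt.hasDerivAt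

lemma eqOn_mul_deriv_cayley_sq :
    EqOn (fun t => t * deriv cayley t ^ 2)
      (fun t => 4 * ((t + 1) ^ (-3 : ℝ) - (t + 1) ^ (-4 : ℝ))) (Ioi 0) := by
  intro t (ht : 0 < t)
  have hpos : 0 < t + 1 := by positivity
  simp only [(hasDerivAt_cayley (by positivity : 1 + t ≠ 0)).deriv, add_comm 1 t,
    Real.rpow_neg hpos.le, Real.rpow_ofNat]
  field_simp
  ring

lemma integrableOn_Ioi_mul_deriv_cayley_sq :
    IntegrableOn (fun t => t * deriv cayley t ^ 2) (Ioi 0) := by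
  rw [integrableOn_congr_fun eqOn_mul_deriv_cayley_sq measurableSet_Ioi]
  exact ((integrableOn_add_rpow_Ioi_of_lt (by norm_num) (by norm_num)).sub
    (integrableOn_add_rpow_Ioi_of_lt (by norm_num) (by norm_num))).const_mul 4

lemma integral_Ioi_mul_deriv_cayley_sq :
    ∫ t in Ioi (0 : ℝ), t * deriv cayley t ^ 2 = 2 / 3 := by
  rw [setIntegral_congr_fun measurableSet_Ioi eqOn_mul_deriv_cayley_sq, integral_const_mul,
    integral_sub (integrableOn_add_rpow_Ioi_of_lt (by norm_num) (by norm_num))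
      (integrableOn_add_rpow_Ioi_of_lt (by norm_num) (by norm_num)),
    integral_Ioi_add_rpow_of_lt (by norm_num) (by norm_num),
    integral_Ioi_add_rpow_of_lt (by norm_num) (by norm_num)]
  norm_num

end Cayley

lemma differentiableAt_Ynull (α : ℝ) {y : Plane} (hy : y ≠ 0) :
    DifferentiableAt ℝ (Ynull α) y := by
  have hr : 0 < ‖y‖ := norm_pos_iff.mpr hy
  have hprofile := hasDerivAt_comp_rpow hr
    (hasDerivAt_deriv_cayley_of_pos (Real.rpow_pos_of_pos hr α))
  exact (hasGradientAt_comp_norm hy hprofile).differentiableAt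

lemma volume_real_unitBall_plane : volume.real (Metric.ball (0 : Plane) 1) = π := by
  simp [Measure.real, EuclideanSpace.volume_ball_fin_two, Real.pi_nonneg]

-- For `α < 0` the junk value `0 ^ α = 0` enters `Ynull α` only at the origin, a null set.
theorem dirichlet_energy_Ynull_general (α : ℝ) :
    DifferentiableOn ℝ (Ynull α) {y : Plane | y ≠ 0} ∧
      Integrable (fun y : Plane => ‖gradient (Ynull α) y‖ ^ 2) volume ∧
      ∫ y : Plane, ‖gradient (Ynull α) y‖ ^ 2 = 4 * π * |α| / 3 := by
  have hdim : finrank ℝ Plane = 2 := finrank_euclideanSpace_fin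
  refine ⟨fun y hy => (differentiableAt_Ynull α hy).differentiableWithinAt,
    integrable_norm_gradient_comp_norm_rpow_sq volume hdim
      (fun _ => hasDerivAt_deriv_cayley_of_pos) integrableOn_Ioi_mul_deriv_cayley_sq α, ?_⟩
  calc ∫ y : Plane, ‖gradient (Ynull α) y‖ ^ 2
      = 2 * volume.real (Metric.ball (0 : Plane) 1) *
          (|α| * ∫ t in Ioi (0 : ℝ), t * deriv cayley t ^ 2) :=
        integral_norm_gradient_comp_norm_rpow_sq volume hdim
          (fun _ => hasDerivAt_deriv_cayley_of_pos) α
    _ = 4 * π * |α| / 3 := by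
        rw [volume_real_unitBall_plane, integral_Ioi_mul_deriv_cayley_sq]
        ring

theorem dirichlet_energy_Ynull (α : ℝ) (hα : 0 < α) :
    DifferentiableOn ℝ (Ynull α) {y : Plane | y ≠ 0} ∧
      Integrable (fun y : Plane => ‖gradient (Ynull α) y‖ ^ 2) volume ∧
      ∫ y : Plane, ‖gradient (Ynull α) y‖ ^ 2 = 4 * π * α / 3 := by
  simpa only [abs_of_pos hα] using dirichlet_energy_Ynull_general α
end
end
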